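/- For every integer n > 1 and every DWA B = ({a,b,i}, Q, q₀, δ, c) with exactly n + 2 states that realizes O_n, write q_j = δ̂(q₀, i^j) for 0 ≤ j ≤ n. Then for every j < n, c(q_j, a) = −Σ_{k=j+1}^{n} c(q_k, b) and c(q_j, b) = −Σ_{k=j+1}^{n} c(q_k, a); consequently c(q_0, a) = 2^{n−2}·(c(q_{n−1}, a) + c(q_n, a)) ≥ 2^{n−1}. In particular, every DWA with the minimal number of states realizing O_n has a weight that is exponential in n, even though O_n is realized by some DWA with all weights in {−1, 0, 1}. -/

import Mathlib

/-- A deterministic weighted automaton (DWA) over alphabet `A` with state space `Q`. -/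
structure DWA (A : Type) (Q : Type) where
  init : Q
  δ : Q → A → Q
  c : Q → A → ℤ

/-- The extended transition function `δ̂`. -/
def DWA.run {A Q : Type} (M : DWA A Q) (q : Q) (w : List A) : Q :=
  w.foldl M.δ q

/-- The accumulated weight of the run on `w` starting in state `q`. -/
def DWA.valFrom {A Q : Type} (M : DWA A Q) : Q → List A → ℤ
  | _, [] => 0
  | q, x :: w => M.c q x + M.valFrom (M.δ q x) w

/-- The value `A(w)` of a word: the sum of the weights along the run from the initial state. -/
def DWA.val {A Q : Type} (M : DWA A Q) (w : List A) : ℤ :=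
  M.valFrom M.init w

/-- The three-letter alphabet `{a, b, i}`. -/
inductive ABI where
  | a : ABI
  | b : ABI
  | i : ABI
deriving DecidableEq

open Classical in
/-- The observation function `O_n` on nonempty words over `{a, b, i}`:
`O_n(w) = 1` if `w` consists only of `i`'s, or `i^{n+1}` is a prefix of `w`, or
`i^k·a·b^{n-k}` or `i^k·b·a^{n-k}` is a prefix of `w` for some `k < n`; otherwise `O_n(w) = 2`
if the first letter of `w` different from `i` is `a`, and `O_n(w) = 0` if it is `b`. -/
noncomputable def Obs (n : ℕ) (w : List ABI) : ℕ :=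
  if (∀ x ∈ w, x = ABI.i) ∨
      (List.replicate (n + 1) ABI.i <+: w) ∨
      (∃ k < n, List.replicate k ABI.i ++ [ABI.a] ++ List.replicate (n - k) ABI.b <+: w) ∨
      (∃ k < n, List.replicate k ABI.i ++ [ABI.b] ++ List.replicate (n - k) ABI.a <+: w)
  then 1
  else if ∃ k, List.replicate k ABI.i ++ [ABI.a] <+: w then 2
  else 0

/-- A DWA `M` over `{a, b, i}` realizes `O_n` if, for every nonempty word `w`,
`M(w) < 0 ↔ O_n(w) = 0`, `M(w) = 0 ↔ O_n(w) = 1`, and `M(w) > 0 ↔ O_n(w) = 2`. -/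
def Realizes {Q : Type} (n : ℕ) (M : DWA ABI Q) : Prop :=
  ∀ w : List ABI, w ≠ [] →
    (M.val w < 0 ↔ Obs n w = 0) ∧ (M.val w = 0 ↔ Obs n w = 1) ∧ (0 < M.val w ↔ Obs n w = 2)

theorem valFrom_append {A Q : Type} (M : DWA A Q) (q : Q) (u v : List A) :
    M.valFrom q (u ++ v) = M.valFrom q u + M.valFrom (M.run q u) v := by
  induction u generalizing q with
  | nil => simp [DWA.valFrom, DWA.run]
  | cons x u ih =>
    have := ih (M.δ q x)
    simp only [List.cons_append, DWA.valFrom, this, DWA.run, List.foldl_cons]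
    ring

theorem run_append {A Q : Type} (M : DWA A Q) (q : Q) (u v : List A) :
    M.run q (u ++ v) = M.run (M.run q u) v := by
  simp [DWA.run]

theorem prefix_get {A : Type} {u w : List A} (h : u <+: w) (j : ℕ) (x : A)
    (hx : u[j]? = some x) : w[j]? = some x := by
  obtain ⟨t, rfl⟩ := h
  obtain ⟨hj, -⟩ := List.getElem?_eq_some_iff.1 hx
  rw [List.getElem?_append_left hj, hx]

theorem get_mid {A : Type} (x y z : A) (k m : ℕ) :
    (List.replicate k x ++ [y] ++ List.replicate m z)[k]? = some y := by
  simp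

theorem get_left {A : Type} (x : A) (t : List A) (k j : ℕ) (h : j < k) :
    (List.replicate k x ++ t)[j]? = some x := by
  rw [List.getElem?_append_left (by simpa using h)]
  simp [h]

/-- Words `i^k x y^m` that are too short are not observed as `1`. -/
theorem not_one (n k m : ℕ) (x y : ABI) (hx : x ≠ ABI.i) (h : k + m < n ∨ (k = n ∧ m = 0)) :
    ¬ ((∀ z ∈ List.replicate k ABI.i ++ [x] ++ List.replicate m y, z = ABI.i) ∨
      (List.replicate (n + 1) ABI.i <+: List.replicate k ABI.i ++ [x] ++ List.replicate m y) ∨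
      (∃ l < n, List.replicate l ABI.i ++ [ABI.a] ++ List.replicate (n - l) ABI.b <+:
        List.replicate k ABI.i ++ [x] ++ List.replicate m y) ∨
      (∃ l < n, List.replicate l ABI.i ++ [ABI.b] ++ List.replicate (n - l) ABI.a <+:
        List.replicate k ABI.i ++ [x] ++ List.replicate m y)) := by
  have key : ∀ l < n, ∀ u v : ABI, u ≠ ABI.i →
      ¬ (List.replicate l ABI.i ++ [u] ++ List.replicate (n - l) v <+:
        List.replicate k ABI.i ++ [x] ++ List.replicate m y) := by
    intro l hl u v hu hp
    have hlen := hp.length_le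
    simp at hlen
    have h1 := prefix_get hp l u (get_mid _ _ _ _ _)
    rw [List.append_assoc, get_left _ _ _ _ (by omega)] at h1
    simp at h1
    exact hu h1.symm
  rintro (h1 | h1 | ⟨l, hl, h1⟩ | ⟨l, hl, h1⟩)
  · exact hx (h1 x (by simp))
  · have h2 := prefix_get h1 k ABI.i (by rw [List.getElem?_replicate, if_pos (by omega)])
    rw [get_mid] at h2
    simp at h2
    exact hx h2
  · exact key l hl _ _ (by simp) h1
  · exact key l hl _ _ (by simp) h1

theorem Obs_two (n k m : ℕ) (h : k + m < n ∨ (k = n ∧ m = 0)) :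
    Obs n (List.replicate k ABI.i ++ [ABI.a] ++ List.replicate m ABI.b) = 2 := by
  unfold Obs
  rw [if_neg (not_one n k m _ _ (by simp) h), if_pos ⟨k, List.prefix_append _ _⟩]

theorem Obs_zero (n k m : ℕ) (h : k + m < n ∨ (k = n ∧ m = 0)) :
    Obs n (List.replicate k ABI.i ++ [ABI.b] ++ List.replicate m ABI.a) = 0 := by
  unfold Obs
  rw [if_neg (not_one n k m _ _ (by simp) h), if_neg]
  rintro ⟨l, hp⟩
  rcases lt_trichotomy l k with hl | rfl | hl
  · have h1 := prefix_get hp l ABI.a (by simp)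
    rw [List.append_assoc, get_left _ _ _ _ hl] at h1
    simp at h1
  · have h1 := prefix_get hp l ABI.a (by simp)
    rw [get_mid] at h1
    simp at h1
  · have h1 := prefix_get hp k ABI.i (get_left _ _ _ _ hl)
    rw [get_mid] at h1
    simp at h1

def Dead {Q : Type} (M : DWA ABI Q) (p : Q) : Prop := ∀ w, M.valFrom p w = 0

/-- Reading `y`'s from `p`, a dead state is reached for the first time after `d` steps. -/
def Exact {Q : Type} (M : DWA ABI Q) (p : Q) (y : ABI) (d : ℕ) : Prop :=
  Dead M (M.run p (List.replicate d y)) ∧ ∀ m < d, ¬ Dead M (M.run p (List.replicate m y))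

theorem Exact.unique {Q : Type} {M : DWA ABI Q} {p : Q} {y : ABI} {d e : ℕ}
    (h : Exact M p y d) (h' : Exact M p y e) : d = e := by
  rcases lt_trichotomy d e with hl | rfl | hl
  · exact absurd h.1 (h'.2 d hl)
  · rfl
  · exact absurd h'.1 (h.2 e hl)

theorem run_rep_succ {Q : Type} (M : DWA ABI Q) (p : Q) (y : ABI) (d : ℕ) :
    M.run p (List.replicate (d + 1) y) = M.run (M.δ p y) (List.replicate d y) := by
  simp [DWA.run, List.replicate_succ]

theorem exact_succ {Q : Type} {M : DWA ABI Q} {p : Q} {y : ABI} {d : ℕ} :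
    Exact M p y (d + 1) ↔ ¬ Dead M p ∧ Exact M (M.δ p y) y d := by
  constructor
  · rintro ⟨h1, h2⟩
    refine ⟨h2 0 (by omega), by rwa [run_rep_succ] at h1, fun m hm => ?_⟩
    rw [← run_rep_succ]
    exact h2 _ (by omega)
  · rintro ⟨h0, h1, h2⟩
    refine ⟨by rwa [run_rep_succ], fun m hm => ?_⟩
    cases m with
    | zero => exact h0
    | succ m => rw [run_rep_succ]; exact h2 m (by omega)

/-- The structural step: transitions are forced. -/
theorem step_aux {Q : Type} (M : DWA ABI Q) (n : ℕ) (q : ℕ → Q)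
    (dead_iff : ∀ k ≤ n + 1, (Dead M (q k) ↔ k = n + 1))
    (surj : ∀ p, ∃ k ≤ n + 1, q k = p)
    (x y : ABI)
    (Fyx : ∀ k < n, Exact M (M.δ (q k) y) x (n - k))
    (j : ℕ) (hj : j < n)
    (Ex : ∀ k, j < k → k ≤ n + 1 → Exact M (q k) x (n + 1 - k))
    (Ey : ∀ k, j < k → k ≤ n + 1 → Exact M (q k) y (n + 1 - k))
    (p : Q) (hp : Exact M p y (n - j)) : p = q (j + 1) := by
  have main : ∀ d ≤ n - j, ∀ m ≤ n + 1, Exact M (q m) y d → j < m := by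
    intro d
    induction d with
    | zero =>
      intro _ m hm h
      have := (dead_iff m hm).1 h.1
      omega
    | succ d ih =>
      intro hd m hm h
      by_contra hmj
      obtain ⟨m', hm', e⟩ := surj (M.δ (q m) y)
      have h1 := (exact_succ.1 h).2
      rw [← e] at h1
      have h2 := ih (by omega) m' hm' h1
      have h3 := Fyx m (by omega)
      rw [← e] at h3
      have h4 := h3.unique (Ex m' h2 hm')
      have h5 := h1.unique (Ey m' h2 hm')
      omega
  obtain ⟨m, hm, rfl⟩ := surj p
  have h1 := main _ le_rfl m hm hp
  have h2 := hp.unique (Ey m h1 hm)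
  congr 1
  omega

theorem structure_aux {Q : Type} (M : DWA ABI Q) (n : ℕ) (hn : 1 < n) (q : ℕ → Q)
    (dead_iff : ∀ k ≤ n + 1, (Dead M (q k) ↔ k = n + 1))
    (surj : ∀ p, ∃ k ≤ n + 1, q k = p)
    (Fab : ∀ k < n, Exact M (M.δ (q k) ABI.a) ABI.b (n - k))
    (Fba : ∀ k < n, Exact M (M.δ (q k) ABI.b) ABI.a (n - k)) :
    ∀ k ≤ n, M.δ (q k) ABI.a = q (k + 1) ∧ M.δ (q k) ABI.b = q (k + 1) := by
  have dead_eq : ∀ p, Dead M p → p = q (n + 1) := by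
    intro p hp
    obtain ⟨k, hk, rfl⟩ := surj p
    rw [(dead_iff k hk).1 hp]
  have base : ∀ x y : ABI, (∀ k < n, Exact M (M.δ (q k) x) y (n - k)) →
      (∀ k < n, Exact M (M.δ (q k) y) x (n - k)) → M.δ (q n) y = q (n + 1) := by
    intro x y Fxy Fyx
    obtain ⟨m, hm, e⟩ := surj (M.δ (q (n - 1)) x)
    have h1 := Fxy (n - 1) (by omega)
    rw [← e, show n - (n - 1) = 0 + 1 by omega, exact_succ, dead_iff m hm] at h1
    obtain ⟨h1, h2⟩ := h1
    have h3 : m = n := by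
      by_contra hne
      exact (Fyx m (by omega)).2 0 (by omega) h2.1
    subst h3
    exact dead_eq _ h2.1
  have down : ∀ t ≤ n, ∀ k, n - t ≤ k → k ≤ n →
      M.δ (q k) ABI.a = q (k + 1) ∧ M.δ (q k) ABI.b = q (k + 1) := by
    intro t
    induction t with
    | zero =>
      intro _ k h1 h2
      obtain rfl : k = n := by omega
      exact ⟨base _ _ Fba Fab, base _ _ Fab Fba⟩
    | succ t ih =>
      intro ht k h1 h2
      by_cases hk : n - t ≤ k
      · exact ih (by omega) k hk h2
      have ih' := ih (by omega)
      have E : ∀ z : ABI, (∀ l, k < l → l ≤ n → M.δ (q l) z = q (l + 1)) →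
          ∀ d l, k < l → l ≤ n + 1 → d = n + 1 - l → Exact M (q l) z d := by
        intro z hz d
        induction d with
        | zero =>
          intro l _ h4 h5
          exact ⟨(dead_iff l h4).2 (by omega), by simp⟩
        | succ d ihd =>
          intro l h3 h4 h5
          rw [exact_succ, dead_iff l h4, hz l h3 (by omega)]
          exact ⟨by omega, ihd (l + 1) (by omega) (by omega) (by omega)⟩
      have Ea := fun l h3 h4 => E ABI.a (fun l h3 h4 => (ih' l (by omega) h4).1) _ l h3 h4 rfl
      have Eb := fun l h3 h4 => E ABI.b (fun l h3 h4 => (ih' l (by omega) h4).2) _ l h3 h4 rfl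
      exact ⟨step_aux M n q dead_iff surj ABI.a ABI.b Fba k (by omega) Ea Eb _ (Fab k (by omega)),
        step_aux M n q dead_iff surj ABI.b ABI.a Fab k (by omega) Eb Ea _ (Fba k (by omega))⟩
  intro k hk
  exact down n le_rfl k (by omega) hk

theorem sum_Icc_head (f : ℕ → ℤ) (k n : ℕ) (h : k ≤ n) :
    ∑ l ∈ Finset.Icc k n, f l = f k + ∑ l ∈ Finset.Icc (k + 1) n, f l := by
  rw [← Finset.add_sum_Ioc_eq_sum_Icc h]
  congr 2
  ext l
  simp only [Finset.mem_Ioc, Finset.mem_Icc]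
  omega

theorem valFrom_chain {Q : Type} (M : DWA ABI Q) (n : ℕ) (q : ℕ → Q) (y : ABI)
    (h : ∀ k ≤ n, M.δ (q k) y = q (k + 1)) (d : ℕ) : ∀ k, k + d = n + 1 →
    M.valFrom (q k) (List.replicate d y) = ∑ l ∈ Finset.Icc k n, M.c (q l) y := by
  induction d with
  | zero =>
    intro k hk
    rw [Finset.Icc_eq_empty (by omega)]
    simp [DWA.valFrom]
  | succ d ih =>
    intro k hk
    rw [List.replicate_succ, DWA.valFrom, h k (by omega), ih (k + 1) (by omega),
      sum_Icc_head _ k n (by omega)]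

theorem recur (n : ℕ) (hn : 1 < n) (A B : ℕ → ℤ)
    (h : ∀ j < n, A j = -∑ k ∈ Finset.Icc (j + 1) n, B k ∧
      B j = -∑ k ∈ Finset.Icc (j + 1) n, A k) :
    A 0 = 2 ^ (n - 2) * (A (n - 1) + A n) := by
  have hs : ∀ j, j + 1 < n → A j = A (j + 1) - B (j + 1) ∧ B j = B (j + 1) - A (j + 1) := by
    intro j hj
    have h1 := h j (by omega)
    have h2 := h (j + 1) hj
    rw [sum_Icc_head _ (j + 1) n (by omega), sum_Icc_head _ (j + 1) n (by omega)] at h1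
    constructor <;> linarith [h1.1, h1.2, h2.1, h2.2]
  have hp : ∀ t j, j + t + 1 = n → A j - B j = 2 ^ t * (A (n - 1) - B (n - 1)) := by
    intro t
    induction t with
    | zero => intro j hj; simp [← hj]
    | succ t ih =>
      intro j hj
      have h1 := hs j (by omega)
      have h2 := ih (j + 1) (by omega)
      rw [h1.1, h1.2, pow_succ]
      linarith
  have h1 := hp (n - 2) 1 (by omega)
  have h2 := (hs 0 (by omega)).1
  have h3 := (h (n - 1) (by omega)).2
  rw [show n - 1 + 1 = n by omega, Finset.Icc_self, Finset.sum_singleton] at h3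
  rw [h2, zero_add, h1, h3]
  ring

/-- in every DWA with the minimal number `n + 2` of states realizing `O_n`,
writing `q j = δ̂(q₀, i^j)`, the weights satisfy
`c(q_j, a) = -∑_{k=j+1}^{n} c(q_k, b)` and `c(q_j, b) = -∑_{k=j+1}^{n} c(q_k, a)` for `j < n`,
hence `c(q_0, a) = 2^{n-2}·(c(q_{n-1}, a) + c(q_n, a)) ≥ 2^{n-1}`: some weight is
exponential in `n` (even though `O_n` is realized by a DWA with weights in `{-1, 0, 1}`). -/
theorem minimal_dwa_exponential_weights (n : ℕ) (hn : 1 < n) (Q : Type) [Fintype Q]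
    (M : DWA ABI Q) (hcard : Fintype.card Q = n + 2) (hM : Realizes n M) :
    let q : ℕ → Q := fun j => M.run M.init (List.replicate j ABI.i)
    (∀ j < n,
      M.c (q j) ABI.a = -∑ k ∈ Finset.Icc (j + 1) n, M.c (q k) ABI.b ∧
      M.c (q j) ABI.b = -∑ k ∈ Finset.Icc (j + 1) n, M.c (q k) ABI.a) ∧
    M.c (q 0) ABI.a = 2 ^ (n - 2) * (M.c (q (n - 1)) ABI.a + M.c (q n) ABI.a) ∧
    (2 : ℤ) ^ (n - 1) ≤ M.c (q 0) ABI.a := by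
  intro q
  have hq : ∀ k, M.val (List.replicate k ABI.i) = 0 := by
    intro k
    rcases Nat.eq_zero_or_pos k with rfl | hk
    · simp [DWA.val, DWA.valFrom]
    · refine ((hM _ (by simp; omega)).2.1).2 ?_
      unfold Obs
      rw [if_pos (Or.inl (by simp))]
  have hv : ∀ k w, M.val (List.replicate k ABI.i ++ w) = M.valFrom (q k) w := by
    intro k w
    have h1 := hq k
    unfold DWA.val at h1 ⊢
    rw [valFrom_append, h1, zero_add]
  have hadd : ∀ k l, q (k + l) = M.run (q k) (List.replicate l ABI.i) := by
    intro k l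
    simp only [q]
    rw [List.replicate_add, run_append]
  have dead1 : Dead M (q (n + 1)) := by
    intro w
    rw [← hv]
    refine ((hM _ (by simp)).2.1).2 ?_
    unfold Obs
    rw [if_pos (Or.inr (Or.inl (List.prefix_append _ _)))]
  have Z1 : ∀ k < n, ∀ w, M.valFrom (q k) ([ABI.a] ++ List.replicate (n - k) ABI.b ++ w) = 0 := by
    intro k hk w
    rw [← hv]
    refine ((hM _ (by simp)).2.1).2 ?_
    unfold Obs
    rw [if_pos (Or.inr (Or.inr (Or.inl ⟨k, hk, w, by simp⟩)))]
  have Z2 : ∀ k < n, ∀ w, M.valFrom (q k) ([ABI.b] ++ List.replicate (n - k) ABI.a ++ w) = 0 := by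
    intro k hk w
    rw [← hv]
    refine ((hM _ (by simp)).2.1).2 ?_
    unfold Obs
    rw [if_pos (Or.inr (Or.inr (Or.inr ⟨k, hk, w, by simp⟩)))]
  have P : ∀ k m, (k + m < n ∨ (k = n ∧ m = 0)) →
      0 < M.valFrom (q k) ([ABI.a] ++ List.replicate m ABI.b) := by
    intro k m h
    rw [← hv, ← List.append_assoc]
    exact ((hM _ (by simp)).2.2).2 (Obs_two n k m h)
  have N : ∀ k m, (k + m < n ∨ (k = n ∧ m = 0)) →
      M.valFrom (q k) ([ABI.b] ++ List.replicate m ABI.a) < 0 := by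
    intro k m h
    rw [← hv, ← List.append_assoc]
    exact ((hM _ (by simp)).1).2 (Obs_zero n k m h)
  have cpos : ∀ k ≤ n, 0 < M.c (q k) ABI.a := by
    intro k hk
    have := P k 0 (by omega)
    simpa [DWA.valFrom] using this
  have ndead : ∀ k ≤ n, ¬ Dead M (q k) := by
    intro k hk h
    have h1 := P k 0 (by omega)
    rw [h] at h1
    exact lt_irrefl _ h1
  have dead_iff : ∀ k ≤ n + 1, (Dead M (q k) ↔ k = n + 1) := by
    intro k hk
    constructor
    · intro h
      by_contra hne
      exact ndead k (by omega) h
    · rintro rfl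
      exact dead1
  have inj : ∀ j k, j < k → k ≤ n + 1 → q j ≠ q k := by
    intro j k hjk hk h
    apply ndead (j + (n + 1 - k)) (by omega)
    rw [hadd, h, ← hadd, show k + (n + 1 - k) = n + 1 by omega]
    exact dead1
  have surj : ∀ p, ∃ k ≤ n + 1, q k = p := by
    have hi : Function.Injective (fun k : Fin (n + 2) => q k) := by
      intro j k h
      by_contra hne
      rcases lt_or_gt_of_ne hne with hl | hl
      · exact inj j k hl (by omega) h
      · exact inj k j hl (by omega) h.symm
    have hb := (Fintype.bijective_iff_injective_and_card _).2 ⟨hi, by simp [hcard]⟩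
    intro p
    obtain ⟨k, hk⟩ := hb.2 p
    exact ⟨k, by omega, hk⟩
  have F : ∀ x y : ABI,
      (∀ k < n, ∀ w, M.valFrom (q k) ([x] ++ List.replicate (n - k) y ++ w) = 0) →
      (∀ k m, k + m < n → M.valFrom (q k) ([x] ++ List.replicate m y) ≠ 0) →
      ∀ k < n, Exact M (M.δ (q k) x) y (n - k) := by
    intro x y h0 h1 k hk
    have hr : ∀ m, M.run (M.δ (q k) x) (List.replicate m y) =
        M.run (q k) ([x] ++ List.replicate m y) := by
      intro m
      simp [DWA.run]
    refine ⟨fun w => ?_, fun m hm hd => ?_⟩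
    · have h2 := h0 k hk w
      have h3 := h0 k hk []
      rw [List.append_nil] at h3
      rw [valFrom_append, h3, zero_add] at h2
      rw [hr, h2]
    · apply h1 k m (by omega)
      have h2 := h0 k hk []
      rw [List.append_nil, show n - k = m + (n - k - m) by omega, List.replicate_add,
        ← List.append_assoc, valFrom_append, ← hr, hd, add_zero] at h2
      exact h2
  have st := structure_aux M n hn q dead_iff surj
    (F _ _ Z1 fun k m h => (P k m (Or.inl h)).ne')
    (F _ _ Z2 fun k m h => (N k m (Or.inl h)).ne)
  have main : ∀ j < n,
      M.c (q j) ABI.a = -∑ k ∈ Finset.Icc (j + 1) n, M.c (q k) ABI.b ∧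
      M.c (q j) ABI.b = -∑ k ∈ Finset.Icc (j + 1) n, M.c (q k) ABI.a := by
    intro j hj
    have h1 := Z1 j hj []
    have h2 := Z2 j hj []
    rw [List.append_nil, List.singleton_append, DWA.valFrom, (st j hj.le).1,
      valFrom_chain M n q ABI.b (fun k hk => (st k hk).2) _ _ (by omega)] at h1
    rw [List.append_nil, List.singleton_append, DWA.valFrom, (st j hj.le).2,
      valFrom_chain M n q ABI.a (fun k hk => (st k hk).1) _ _ (by omega)] at h2
    constructor <;> linarith
  have rec0 := recur n hn (fun k => M.c (q k) ABI.a) (fun k => M.c (q k) ABI.b) main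
  refine ⟨main, rec0, ?_⟩
  have rec1 : M.c (q 0) ABI.a = 2 ^ (n - 2) * (M.c (q (n - 1)) ABI.a + M.c (q n) ABI.a) := rec0
  rw [rec1, show n - 1 = n - 2 + 1 by omega, pow_succ]
  have c1 := cpos (n - 2 + 1) (by omega)
  have c2 := cpos n le_rfl
  exact mul_le_mul_of_nonneg_left (by linarith) (by positivity)
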